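/- Let d ≥ 1, let ρ > 0 and C_L > 0. Then there exist constants Ĉ > 0, C ≥ Ĉ², and μ > 0 such that the 2d×2d block matrices P = [[I_d, Ĉ I_d], [Ĉ I_d, C I_d]] and K = [[2Ĉ I_d, (C − C_L² + ρĈ) I_d], [(C − C_L² + ρĈ) I_d, (2ρC − 2C_L²Ĉ) I_d]] satisfy K ⪰ 2μP ⪰ 0 in the Loewner (positive-semidefinite) order. Specifically, one may take Ĉ = ρ/2 together with C = C_L² when ρ < 2C_L, and C = ρ²/2 − C_L² when ρ ≥ 2C_L. -/

import Mathlib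

open Matrix

/-!
Writing `P = P₀ ⊗ I` and `K = K₀ ⊗ I` with `2 × 2` real matrices `P₀`, `K₀`, the matrix
`K - 2μP` is, up to a permutation of the indices, block diagonal with all blocks equal to
`K₀ - 2μP₀`, so the claim is one about `2 × 2` determinants. Let `Ĉ = ρ / 2`. For `C = C_L²` one has
`K₀ = ρ P₀` exactly, so `μ = ρ / 2` works. For `C = ρ² / 2 - C_L²` take `μ = C_L² / ρ`; then
`det (K₀ - 2μP₀) = μ² ρ (ρ - 4μ)`, which is nonnegative as soon as `2 C_L ≤ ρ`.
-/

section TwoByTwo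

variable {S : Type*} [CommRing S] [LinearOrder S] [IsStrictOrderedRing S] {a b e : S}

lemma quadratic_form_nonneg_of_sq_le_mul (ha : 0 ≤ a) (he : 0 ≤ e) (h : b ^ 2 ≤ a * e)
    (x y : S) : 0 ≤ a * x ^ 2 + 2 * b * x * y + e * y ^ 2 := by
  rcases ha.eq_or_lt with rfl | ha
  · obtain rfl : b = 0 := by simpa using h.trans_eq (zero_mul e)
    simpa using mul_nonneg he (sq_nonneg y)
  · have complete_square : a * (a * x ^ 2 + 2 * b * x * y + e * y ^ 2)
        = (a * x + b * y) ^ 2 + (a * e - b ^ 2) * y ^ 2 := by ring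
    refine nonneg_of_mul_nonneg_right (complete_square ▸ ?_) ha
    exact add_nonneg (sq_nonneg _) (mul_nonneg (sub_nonneg.2 h) (sq_nonneg y))

lemma posSemidef_fin_two_of_sq_le_mul [StarRing S] [TrivialStar S] (ha : 0 ≤ a) (he : 0 ≤ e)
    (h : b ^ 2 ≤ a * e) : (!![a, b; b, e]).PosSemidef := by
  refine .of_dotProduct_mulVec_nonneg ?_ fun x ↦ ?_
  · ext i j
    fin_cases i <;> fin_cases j <;> simp
  · convert quadratic_form_nonneg_of_sq_le_mul ha he h (x 0) (x 1) using 1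
    simp only [dotProduct, mulVec, Fin.sum_univ_two, star_trivial, of_apply, cons_val',
      cons_val_zero, cons_val_one]
    ring

end TwoByTwo

section Blocks

variable {R m n : Type*} [DecidableEq n]

lemma finsuppSum_ite_eq_fst {N : Type*} [Zero R] [AddCommMonoid N] (x : n × m →₀ R) (k : n)
    (f : m → R → N) :
    (x.sum fun p v ↦ if k = p.1 then f p.2 v else 0) = (x.curry k).sum f := by
  rw [← Finsupp.sum_curry_index x fun l j v ↦ if k = l then f j v else 0, Finsupp.sum,
    Finset.sum_eq_single k]
  · simp only [if_true]
  · intro l _ hl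
    simp only [if_neg hl.symm, Finsupp.sum, Finset.sum_const_zero]
  · intro hk
    rw [Finsupp.notMem_support_iff.1 hk, Finsupp.sum_zero_index]

variable [Ring R]

lemma posSemidef_blockDiagonal [PartialOrder R] [IsOrderedAddMonoid R] [StarRing R]
    {M : n → Matrix m m R} (hM : ∀ k, (M k).PosSemidef) : (blockDiagonal M).PosSemidef := by
  -- `blockDiagonal` puts the block index last, while currying groups by the first component.
  refine (posSemidef_submatrix_equiv (Equiv.prodComm n m)).1
    ⟨(isHermitian_blockDiagonal_iff.2 fun k ↦ (hM k).isHermitian).submatrix _, fun x ↦ ?_⟩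
  have sum_blocks : (x.sum fun p u ↦ x.sum fun q v ↦
        star u * (blockDiagonal M).submatrix (Equiv.prodComm n m) (Equiv.prodComm n m) p q * v) =
      x.curry.sum fun k y ↦ y.sum fun i u ↦ (x.curry k).sum fun j v ↦ star u * M k i j * v := by
    simp only [submatrix_apply, blockDiagonal_apply, Equiv.prodComm_apply, Prod.fst_swap,
      Prod.snd_swap, mul_ite, ite_mul, mul_zero, zero_mul]
    rw [Finsupp.sum_curry_index x fun k i u ↦ (x.curry k).sum fun j v ↦ star u * M k i j * v]
    exact Finsupp.sum_congr fun p _ ↦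
      finsuppSum_ite_eq_fst x p.1 fun j v ↦ star (x p) * M p.1 p.2 j * v
  rw [sum_blocks]
  exact Finset.sum_nonneg fun k _ ↦ (hM k).2 (x.curry k)

variable (n) in
/-- The Kronecker product `A ⊗ I` of a `2 × 2` matrix `A` with the identity matrix indexed by `n`,
used to reduce `K ⪰ 2μP ⪰ 0` to `2 × 2` matrices. It is indexed by `n ⊕ n`, as `fromBlocks` is,
rather than by `Fin 2 × n`. -/
def scalarBlocks (A : Matrix (Fin 2) (Fin 2) R) : Matrix (n ⊕ n) (n ⊕ n) R :=
  fromBlocks (A 0 0 • 1) (A 0 1 • 1) (A 1 0 • 1) (A 1 1 • 1)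

lemma scalarBlocks_eq_submatrix_blockDiagonal (A : Matrix (Fin 2) (Fin 2) R) :
    scalarBlocks n A = (blockDiagonal fun _ : n ↦ A).submatrix
      (Sum.elim (Prod.mk 0) (Prod.mk 1)) (Sum.elim (Prod.mk 0) (Prod.mk 1)) := by
  ext (i | i) (j | j) <;> simp [scalarBlocks, blockDiagonal_apply, one_apply]

lemma scalarBlocks_sub (A B : Matrix (Fin 2) (Fin 2) R) :
    scalarBlocks n (A - B) = scalarBlocks n A - scalarBlocks n B := by
  ext (i | i) (j | j) <;> simp [scalarBlocks, sub_mul]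

lemma scalarBlocks_smul (c : R) (A : Matrix (Fin 2) (Fin 2) R) :
    scalarBlocks n (c • A) = c • scalarBlocks n A := by
  ext (i | i) (j | j) <;> simp [scalarBlocks, mul_assoc]

lemma posSemidef_scalarBlocks [PartialOrder R] [IsOrderedAddMonoid R] [StarRing R]
    {A : Matrix (Fin 2) (Fin 2) R} (hA : A.PosSemidef) : (scalarBlocks n A).PosSemidef := by
  rw [scalarBlocks_eq_submatrix_blockDiagonal]
  exact (posSemidef_blockDiagonal fun _ ↦ hA).submatrix _

end Blocks

/-- The `2 × 2` matrix `P₀` with `P = P₀ ⊗ I`, the quadratic form of the modified norm in the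
hypocoercivity argument. The argument `c` is the constant `Ĉ`. -/
def twistMatrix (c C : ℝ) : Matrix (Fin 2) (Fin 2) ℝ :=
  !![1, c; c, C]

/-- The `2 × 2` matrix `K₀` with `K = K₀ ⊗ I`, the dissipation form that the hypocoercivity
argument compares with `P`. The arguments `CL` and `c` are the constants `C_L` and `Ĉ`. -/
def dissipationMatrix (ρ CL c C : ℝ) : Matrix (Fin 2) (Fin 2) ℝ :=
  !![2 * c, C - CL ^ 2 + ρ * c; C - CL ^ 2 + ρ * c, 2 * ρ * C - 2 * CL ^ 2 * c]

lemma posSemidef_twistMatrix {c C : ℝ} (h : c ^ 2 ≤ C) : (twistMatrix c C).PosSemidef :=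
  posSemidef_fin_two_of_sq_le_mul zero_le_one ((sq_nonneg c).trans h) (by rwa [one_mul])

lemma dissipationMatrix_eq_smul_twistMatrix (ρ CL : ℝ) :
    dissipationMatrix ρ CL (ρ / 2) (CL ^ 2) = ρ • twistMatrix (ρ / 2) (CL ^ 2) := by
  ext i j
  fin_cases i <;> fin_cases j <;> simp [dissipationMatrix, twistMatrix] <;> ring

lemma posSemidef_dissipationMatrix_sub_smul_twistMatrix {ρ CL : ℝ} (hρ : 0 < ρ)
    (h : 4 * CL ^ 2 ≤ ρ ^ 2) :
    (dissipationMatrix ρ CL (ρ / 2) (ρ ^ 2 / 2 - CL ^ 2) -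
      (2 * (CL ^ 2 / ρ)) • twistMatrix (ρ / 2) (ρ ^ 2 / 2 - CL ^ 2)).PosSemidef := by
  obtain ⟨μ, hμ⟩ : ∃ μ, μ = CL ^ 2 / ρ := ⟨_, rfl⟩
  have hCL : CL ^ 2 = μ * ρ := by rw [hμ, div_mul_cancel₀ _ hρ.ne']
  have hμ_nonneg : 0 ≤ μ := by rw [hμ]; positivity
  have hμ_le : 4 * μ ≤ ρ := by nlinarith
  have entries : dissipationMatrix ρ CL (ρ / 2) (ρ ^ 2 / 2 - CL ^ 2) -
        (2 * μ) • twistMatrix (ρ / 2) (ρ ^ 2 / 2 - CL ^ 2) =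
      !![ρ - 2 * μ, ρ * (ρ - 3 * μ);
        ρ * (ρ - 3 * μ), ρ * (ρ * (ρ - 4 * μ) + 2 * μ ^ 2)] := by
    ext i j
    fin_cases i <;> fin_cases j <;> simp [dissipationMatrix, twistMatrix, hCL] <;> ring
  have det_eq : (ρ - 2 * μ) * (ρ * (ρ * (ρ - 4 * μ) + 2 * μ ^ 2)) - (ρ * (ρ - 3 * μ)) ^ 2 =
      μ ^ 2 * (ρ * (ρ - 4 * μ)) := by ring
  have hgap : 0 ≤ ρ * (ρ - 4 * μ) := mul_nonneg hρ.le (sub_nonneg.2 hμ_le)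
  rw [← hμ, entries]
  refine posSemidef_fin_two_of_sq_le_mul (by linarith [hμ_nonneg])
    (mul_nonneg hρ.le (add_nonneg hgap (by positivity))) (sub_nonneg.1 ?_)
  rw [det_eq]
  exact mul_nonneg (sq_nonneg μ) hgap

theorem stmt12_general (n : Type*) [DecidableEq n] {ρ CL : ℝ} (hρ : 0 < ρ) (hCL : 0 < CL) :
    ∃ Ch C μ : ℝ,
      Ch = ρ / 2 ∧
      (ρ < 2 * CL → C = CL ^ 2) ∧
      (2 * CL ≤ ρ → C = ρ ^ 2 / 2 - CL ^ 2) ∧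
      0 < Ch ∧ Ch ^ 2 ≤ C ∧ 0 < μ ∧
      (scalarBlocks n (dissipationMatrix ρ CL Ch C) -
        (2 * μ) • scalarBlocks n (twistMatrix Ch C)).PosSemidef ∧
      ((2 * μ) • scalarBlocks n (twistMatrix Ch C)).PosSemidef := by
  suffices ∃ C μ : ℝ, (ρ < 2 * CL → C = CL ^ 2) ∧ (2 * CL ≤ ρ → C = ρ ^ 2 / 2 - CL ^ 2) ∧
      (ρ / 2) ^ 2 ≤ C ∧ 0 < μ ∧
      (dissipationMatrix ρ CL (ρ / 2) C - (2 * μ) • twistMatrix (ρ / 2) C).PosSemidef by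
    obtain ⟨C, μ, hC_lt, hC_ge, hC, hμ, hK⟩ := this
    refine ⟨ρ / 2, C, μ, rfl, hC_lt, hC_ge, half_pos hρ, hC, hμ, ?_,
      (posSemidef_scalarBlocks (posSemidef_twistMatrix hC)).smul (by positivity)⟩
    rw [← scalarBlocks_smul, ← scalarBlocks_sub]
    exact posSemidef_scalarBlocks hK
  rcases lt_or_ge ρ (2 * CL) with hlt | hge
  · refine ⟨CL ^ 2, ρ / 2, fun _ ↦ rfl, fun h ↦ absurd hlt h.not_gt, by nlinarith, half_pos hρ, ?_⟩
    rw [dissipationMatrix_eq_smul_twistMatrix, mul_div_cancel₀ ρ two_ne_zero, sub_self]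
    exact .zero
  · have hsq : 4 * CL ^ 2 ≤ ρ ^ 2 := by nlinarith
    exact ⟨ρ ^ 2 / 2 - CL ^ 2, CL ^ 2 / ρ, fun h ↦ absurd h hge.not_gt, fun _ ↦ rfl, by linarith,
      by positivity, posSemidef_dissipationMatrix_sub_smul_twistMatrix hρ hsq⟩

/-- Lemma 8 of the paper: for `ρ > 0` and `C_L > 0` there exist constants
`Ĉ > 0`, `C ≥ Ĉ²`, `μ > 0` — specifically `Ĉ = ρ/2` together with `C = C_L²` when
`ρ < 2C_L` and `C = ρ²/2 - C_L²` when `ρ ≥ 2C_L` — such that the block matrices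
`P = [[I, ĈI],[ĈI, CI]]` and `K = [[2ĈI, (C - C_L² + ρĈ)I],[(C - C_L² + ρĈ)I, (2ρC - 2C_L²Ĉ)I]]`
satisfy `K ⪰ 2μP ⪰ 0` in the Loewner order. -/
theorem stmt12 (d : ℕ) (hd : 1 ≤ d) (ρ CL : ℝ) (hρ : 0 < ρ) (hCL : 0 < CL) :
    ∃ Ch C μ : ℝ,
      Ch = ρ / 2 ∧
      (ρ < 2 * CL → C = CL ^ 2) ∧
      (2 * CL ≤ ρ → C = ρ ^ 2 / 2 - CL ^ 2) ∧
      0 < Ch ∧ Ch ^ 2 ≤ C ∧ 0 < μ ∧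
      (Matrix.fromBlocks
          ((2 * Ch) • (1 : Matrix (Fin d) (Fin d) ℝ))
          ((C - CL ^ 2 + ρ * Ch) • (1 : Matrix (Fin d) (Fin d) ℝ))
          ((C - CL ^ 2 + ρ * Ch) • (1 : Matrix (Fin d) (Fin d) ℝ))
          ((2 * ρ * C - 2 * CL ^ 2 * Ch) • (1 : Matrix (Fin d) (Fin d) ℝ))
        - (2 * μ) • Matrix.fromBlocks
          (1 : Matrix (Fin d) (Fin d) ℝ)
          (Ch • (1 : Matrix (Fin d) (Fin d) ℝ))
          (Ch • (1 : Matrix (Fin d) (Fin d) ℝ))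
          (C • (1 : Matrix (Fin d) (Fin d) ℝ))).PosSemidef ∧
      ((2 * μ) • Matrix.fromBlocks
          (1 : Matrix (Fin d) (Fin d) ℝ)
          (Ch • (1 : Matrix (Fin d) (Fin d) ℝ))
          (Ch • (1 : Matrix (Fin d) (Fin d) ℝ))
          (C • (1 : Matrix (Fin d) (Fin d) ℝ))).PosSemidef := by
  simpa [scalarBlocks, dissipationMatrix, twistMatrix] using stmt12_general (Fin d) hρ hCL
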